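/- arXiv:2604.21810 — 2 statements merged into one kernel-verified Lean document; each statement's English description precedes it below -/
import Mathlib

section
/- Fix positive integers d and k with k ≥ 2. For every ε > 0 there exists n₀ ∈ ℕ such that for all n ≥ n₀, the number of discrete frequencies at which the DFT of the d-dimensional normalized box filter of size k is ε-near zero satisfies #{ (ω₁,…,ω_d) ∈ (2π/n)[n]^d : |b̄_k(ω₁,…,ω_d)| ≤ ε } ≥ d(k−1)n^{d−1} − (d choose 2)(k−1)²n^{d−2}. -/
open scoped BigOperators

/-- The `d`-dimensional normalized box filter of size `k` on `[n]^d` (indices in `ℤ/nℤ`,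
represented by `Fin n`): value `1/k^d` if every coordinate is in `{0,…,k-1}`, else `0`. -/
noncomputable def boxC (n k d : ℕ) : (Fin d → Fin n) → ℂ :=
  fun t => if ∀ ℓ, (t ℓ : ℕ) < k then 1 / (k : ℂ) ^ d else 0

/-- Cyclic convolution on `(ℤ/nℤ)^d`: `(u ⊛ b)(t) = ∑_s b(s) u(t - s)`, indices mod `n`. -/
noncomputable def cconv (n d : ℕ) (b u : (Fin d → Fin n) → ℂ) : (Fin d → Fin n) → ℂ :=
  fun t => ∑ s : Fin d → Fin n, b s * u fun ℓ => t ℓ - s ℓ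

/-- Discrete Fourier transform of `v` at the discrete frequency `ω = 2πm/n`, `m ∈ [n]^d`:
`v̄(ω) = ∑_{t ∈ [n]^d} v(t) e^{-i ∑_ℓ t_ℓ ω_ℓ}`. -/
noncomputable def dft (n d : ℕ) (v : (Fin d → Fin n) → ℂ) (m : Fin d → Fin n) : ℂ :=
  ∑ t : Fin d → Fin n, v t *
    Complex.exp (-Complex.I * ∑ ℓ, ((t ℓ : ℕ) : ℂ) * (2 * (Real.pi : ℂ) * ((m ℓ : ℕ) : ℂ) / (n : ℂ)))


noncomputable def gfac (n k : ℕ) (m : Fin n) : ℂ :=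
  ∑ x : Fin n, (if (x : ℕ) < k then (1 / (k : ℂ)) *
    Complex.exp (-Complex.I * (((x : ℕ) : ℂ) * (2 * (Real.pi : ℂ) * ((m : ℕ) : ℂ) / (n : ℂ)))) else 0)

lemma dft_fac (n k d : ℕ) (m : Fin d → Fin n) :
    dft n d (boxC n k d) m = ∏ ℓ, gfac n k (m ℓ) := by
  unfold dft gfac boxC
  rw [Finset.prod_univ_sum, Fintype.piFinset_univ]
  refine Finset.sum_congr rfl fun t _ => ?_
  by_cases h : ∀ ℓ, (t ℓ : ℕ) < k
  · rw [if_pos h]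
    simp_rw [if_pos (h _)]
    rw [Finset.prod_mul_distrib, Finset.mul_sum, Complex.exp_sum]
    simp
  · rw [if_neg h, zero_mul]
    push Not at h
    obtain ⟨l, hl⟩ := h
    exact (Finset.prod_eq_zero (Finset.mem_univ l) (by rw [if_neg (by omega)])).symm

lemma gfac_eq (n k : ℕ) (hkn : k ≤ n) (m : Fin n) :
    gfac n k m = (1 / (k : ℂ)) * ∑ t ∈ Finset.range k,
      Complex.exp (Complex.I * (((t : ℝ) * (-(2 * Real.pi * (m : ℕ) / n)) : ℝ) : ℂ)) := by
  unfold gfac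
  rw [Fin.sum_univ_eq_sum_range (fun x => if x < k then (1 / (k : ℂ)) *
    Complex.exp (-Complex.I * ((x : ℂ) * (2 * (Real.pi : ℂ) * ((m : ℕ) : ℂ) / (n : ℂ)))) else 0) n,
    ← Finset.sum_filter]
  have : (Finset.range n).filter (fun x => x < k) = Finset.range k := by
    ext x; simp; omega
  rw [this, Finset.mul_sum]
  refine Finset.sum_congr rfl fun t _ => ?_
  congr 2
  push_cast
  ring

lemma norm_e (x : ℝ) : ‖Complex.exp (Complex.I * (x : ℂ))‖ = 1 := by
  rw [mul_comm]; exact Complex.norm_exp_ofReal_mul_I x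

lemma norm_e_sub (x y : ℝ) :
    ‖Complex.exp (Complex.I * (x : ℂ)) - Complex.exp (Complex.I * (y : ℂ))‖ ≤ |x - y| := by
  have h := Real.norm_exp_I_mul_ofReal_sub_one_le (x := x - y)
  have e : Complex.exp (Complex.I * (x : ℂ)) - Complex.exp (Complex.I * (y : ℂ)) =
      Complex.exp (Complex.I * (y : ℂ)) * (Complex.exp (Complex.I * ((x - y : ℝ) : ℂ)) - 1) := by
    rw [mul_sub, ← Complex.exp_add, mul_one]
    congr 2
    push_cast; ring
  rw [e, norm_mul, norm_e, one_mul]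
  exact h

lemma gfac_le_one (n k : ℕ) (hk : 2 ≤ k) (hkn : k ≤ n) (m : Fin n) : ‖gfac n k m‖ ≤ 1 := by
  rw [gfac_eq n k hkn, norm_mul]
  have hk0 : (0 : ℝ) < k := by positivity
  have h : ‖∑ t ∈ Finset.range k,
      Complex.exp (Complex.I * (((t : ℝ) * (-(2 * Real.pi * (m : ℕ) / n)) : ℝ) : ℂ))‖ ≤ k := by
    refine (norm_sum_le _ _).trans ?_
    simp_rw [norm_e]
    simp
  calc _ ≤ ‖(1 / (k : ℂ))‖ * (k : ℝ) := by gcongr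
    _ = 1 := by simp; field_simp

lemma root_sum (k j : ℕ) (hj : 0 < j) (hjk : j < k) :
    ∑ t ∈ Finset.range k,
      Complex.exp (Complex.I * (((t : ℝ) * (-(2 * Real.pi * j / k)) : ℝ) : ℂ)) = 0 := by
  have hk : k ≠ 0 := by omega
  have hkc : (k : ℂ) ≠ 0 := by exact_mod_cast hk
  have hz := Complex.isPrimitiveRoot_exp k hk
  set w : ℂ := ((Complex.exp (2 * Real.pi * Complex.I / k)) ^ j)⁻¹ with hw
  have hw1 : w ≠ 1 := by
    intro h
    exact hz.pow_ne_one_of_pos_of_lt hj.ne' hjk (inv_eq_one.mp h)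
  have hwk : w ^ k = 1 := by
    rw [hw, inv_pow, ← pow_mul, mul_comm j k, pow_mul, hz.pow_eq_one]; simp
  have h0 : ∑ t ∈ Finset.range k, w ^ t = 0 := by
    rw [geom_sum_eq hw1, hwk]; simp
  rw [← h0]
  refine Finset.sum_congr rfl fun t _ => ?_
  rw [hw, ← Complex.exp_nat_mul, ← Complex.exp_neg, ← Complex.exp_nat_mul]
  congr 1
  push_cast
  ring

lemma gfac_small (n k j : ℕ) (hkn : k ≤ n) (hj : 0 < j) (hjk : j < k) (m : Fin n)
    (hm : (m : ℕ) = n * j / k) : ‖gfac n k m‖ ≤ 2 * Real.pi * k / n := by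
  have hk0 : (0 : ℝ) < k := by exact_mod_cast (by omega : 0 < k)
  have hn0 : (0 : ℝ) < n := by exact_mod_cast (by omega : 0 < n)
  have hd : |(j : ℝ) / k - (m : ℕ) / n| ≤ 1 / n := by
    have h1 : (m : ℕ) * k ≤ n * j := by rw [hm]; exact Nat.div_mul_le_self _ _
    have h2 : n * j ≤ ((m : ℕ) + 1) * k := by
      rw [hm, mul_comm _ k]; exact (Nat.lt_mul_div_succ _ (by omega)).le
    have h1' : ((m : ℕ) : ℝ) * k ≤ n * j := by exact_mod_cast h1
    have h2' : (n : ℝ) * j ≤ (((m : ℕ) : ℝ) + 1) * k := by exact_mod_cast h2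
    have a1 : ((m : ℕ) : ℝ) / n ≤ j / k := by
      rw [div_le_div_iff₀ hn0 hk0]; linarith
    have a2 : (j : ℝ) / k ≤ (((m : ℕ) : ℝ) + 1) / n := by
      rw [div_le_div_iff₀ hk0 hn0]; linarith
    rw [add_div] at a2
    rw [abs_le]; constructor
    · have : (0 : ℝ) < 1 / n := by positivity
      linarith
    · linarith
  have h : ‖∑ t ∈ Finset.range k,
      Complex.exp (Complex.I * (((t : ℝ) * (-(2 * Real.pi * (m : ℕ) / n)) : ℝ) : ℂ))‖
      ≤ k * (k * (2 * Real.pi / n)) := by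
    rw [← sub_zero (∑ t ∈ Finset.range k, _), ← root_sum k j hj hjk, ← Finset.sum_sub_distrib]
    refine (norm_sum_le_of_le _ (f := _) (n := fun _ => k * (2 * Real.pi / n)) ?_).trans ?_
    · intro t ht
      refine (norm_e_sub _ _).trans ?_
      have e : (t : ℝ) * (-(2 * Real.pi * (m : ℕ) / n)) - (t : ℝ) * (-(2 * Real.pi * j / k))
        = t * (2 * Real.pi * ((j : ℝ) / k - (m : ℕ) / n)) := by ring
      have htk : (t : ℝ) ≤ k := by exact_mod_cast (Finset.mem_range.mp ht).le
      rw [e, abs_mul, abs_mul, abs_of_nonneg (Nat.cast_nonneg t), abs_of_pos Real.two_pi_pos]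
      have : 2 * Real.pi * |(j : ℝ) / k - (m : ℕ) / n| ≤ 2 * Real.pi / n := by
        rw [div_eq_mul_one_div (2 * Real.pi)]
        exact mul_le_mul_of_nonneg_left hd Real.two_pi_pos.le
      exact mul_le_mul htk this (by positivity) hk0.le
    · simp
  rw [gfac_eq n k hkn, norm_mul]
  calc _ ≤ ‖(1 / (k : ℂ))‖ * (k * (k * (2 * Real.pi / n))) := by gcongr
    _ = 2 * Real.pi * k / n := by simp; field_simp

lemma poly_ineq (N a : ℝ) (ha : 0 ≤ a) (haN : a ≤ N) (d : ℕ) :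
    (N - a) ^ (d + 1) ≤ N ^ (d + 1) - (d + 1 : ℕ) * a * N ^ d +
      ((d + 1).choose 2 : ℝ) * a ^ 2 * N ^ (d - 1) := by
  induction d with
  | zero => simp
  | succ d ih =>
    have hc : ((d + 1 + 1).choose 2 : ℝ) = (d + 1 : ℕ) + ((d + 1).choose 2 : ℝ) := by
      rw [Nat.choose_succ_succ' (d + 1) 1]; simp
    have h := mul_le_mul_of_nonneg_right ih (sub_nonneg.mpr haN)
    rw [← pow_succ] at h
    refine h.trans ?_
    rw [hc]
    rcases d with _ | d
    · simp; nlinarith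
    · have : 0 ≤ ((d + 1 + 1).choose 2 : ℝ) * a ^ 3 * N ^ d := by
        have : 0 ≤ N := ha.trans haN
        positivity
      simp only [Nat.add_sub_cancel]
      push_cast
      rw [← sub_nonneg]
      refine this.trans (le_of_eq ?_)
      ring

lemma exists_S (n k : ℕ) (hk : 2 ≤ k) (hkn : k ≤ n) : ∃ S : Finset (Fin n), S.card = k - 1 ∧
    ∀ m ∈ S, ‖gfac n k m‖ ≤ 2 * Real.pi * k / n := by
  have hlt : ∀ j : Fin (k - 1), n * ((j : ℕ) + 1) / k < n := by
    intro j
    rw [Nat.div_lt_iff_lt_mul (by omega)]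
    exact Nat.mul_lt_mul_of_pos_left (by omega) (by omega)
  let f : Fin (k - 1) → Fin n := fun j => ⟨n * ((j : ℕ) + 1) / k, hlt j⟩
  have hf : StrictMono f := by
    intro i j hij
    change n * ((i : ℕ) + 1) / k < n * ((j : ℕ) + 1) / k
    have hij' : (i : ℕ) + 1 ≤ j := hij
    have : n * ((i : ℕ) + 1) + k ≤ n * ((j : ℕ) + 1) := by nlinarith
    calc n * ((i : ℕ) + 1) / k < (n * ((i : ℕ) + 1) + k) / k := by
          rw [Nat.add_div_right _ (by omega)]; omega
      _ ≤ _ := Nat.div_le_div_right this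
  refine ⟨Finset.univ.image f, ?_, ?_⟩
  · rw [Finset.card_image_of_injective _ hf.injective]; simp
  · intro m hm
    obtain ⟨j, -, rfl⟩ := Finset.mem_image.mp hm
    exact gfac_small n k (j + 1) hkn (by omega) (by omega) _ rfl

theorem stmt11 (d k : ℕ) (hd : 0 < d) (hk : 2 ≤ k) (ε : ℝ) (hε : 0 < ε) :
    ∃ n₀ : ℕ, ∀ n : ℕ, n₀ ≤ n →
      (d : ℝ) * ((k : ℝ) - 1) * (n : ℝ) ^ (d - 1) -
          (d.choose 2 : ℝ) * ((k : ℝ) - 1) ^ 2 * (n : ℝ) ^ (d - 2) ≤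
        (Nat.card {m : Fin d → Fin n // ‖dft n d (boxC n k d) m‖ ≤ ε} : ℝ) := by
  obtain ⟨N, hN⟩ := exists_nat_ge (2 * Real.pi * k / ε)
  refine ⟨max k N, fun n hn => ?_⟩
  have hkn : k ≤ n := (le_max_left _ _).trans hn
  have hNn : N ≤ n := (le_max_right _ _).trans hn
  have hn0 : (0 : ℝ) < n := by exact_mod_cast (by omega : 0 < n)
  have hb : 2 * Real.pi * k / n ≤ ε := by
    have : 2 * Real.pi * k / ε ≤ n := hN.trans (by exact_mod_cast hNn)
    rw [div_le_iff₀ hε] at this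
    rw [div_le_iff₀ hn0]; linarith
  obtain ⟨S, hS, hSs⟩ := exists_S n k hk hkn
  let T : Finset (Fin d → Fin n) := (Fintype.piFinset (fun _ => Sᶜ))ᶜ
  have hT : ∀ m ∈ T, ‖dft n d (boxC n k d) m‖ ≤ ε := by
    intro m hm
    simp only [T, Finset.mem_compl, Fintype.mem_piFinset, not_forall, not_not] at hm
    obtain ⟨l, hl⟩ := hm
    rw [dft_fac, norm_prod, ← Finset.mul_prod_erase _ _ (Finset.mem_univ l)]
    have h1 : ∏ i ∈ Finset.univ.erase l, ‖gfac n k (m i)‖ ≤ 1 :=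
      Finset.prod_le_one (fun _ _ => norm_nonneg _) (fun _ _ => gfac_le_one n k hk hkn _)
    exact (mul_le_of_le_one_right (norm_nonneg _) h1).trans ((hSs _ hl).trans hb)
  have hcard : T.card ≤ Nat.card {m : Fin d → Fin n // ‖dft n d (boxC n k d) m‖ ≤ ε} := by
    have h := Nat.card_le_card_of_injective
      (fun x : T => (⟨x.1, hT x.1 x.2⟩ : {m : Fin d → Fin n // ‖dft n d (boxC n k d) m‖ ≤ ε}))
      (fun x y h => Subtype.ext (congrArg (fun z => z.1) h))
    simpa using h
  have hTc : (T.card : ℝ) = (n : ℝ) ^ d - ((n : ℝ) - ((k : ℝ) - 1)) ^ d := by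
    have h : (Fintype.piFinset (fun _ : Fin d => Sᶜ)).card = (n - (k - 1)) ^ d := by
      simp [Finset.card_compl, hS]
    have h2 := Finset.card_add_card_compl (Fintype.piFinset (fun _ : Fin d => Sᶜ))
    rw [h] at h2
    have h3 : (((n - (k - 1)) ^ d + T.card : ℕ) : ℝ) = (n : ℝ) ^ d := by
      change (n - (k - 1)) ^ d + T.card = _ at h2
      rw [h2]; simp
    rw [Nat.cast_add, Nat.cast_pow, Nat.cast_sub (by omega), Nat.cast_sub (by omega)] at h3
    push_cast at h3
    linarith
  refine le_trans ?_ (Nat.cast_le.mpr hcard)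
  rw [hTc]
  obtain ⟨e, rfl⟩ : ∃ e, d = e + 1 := ⟨d - 1, by omega⟩
  have hk1 : (2 : ℝ) ≤ k := by exact_mod_cast hk
  have hkn' : (k : ℝ) ≤ n := by exact_mod_cast hkn
  have h := poly_ineq n (k - 1) (by linarith) (by linarith) e
  have e2 : e + 1 - 2 = e - 1 := by omega
  rw [e2, Nat.add_sub_cancel]
  linarith
end

section
/- Let d be a positive integer and let k₁,…,k_{d+1} be pairwise coprime integers, each at least 2. For each n ≥ max_j k_j let T_n : ℂ^{(ℤ/nℤ)^d} → (ℂ^{(ℤ/nℤ)^d})^{d+1} be the stacked cyclic-convolution map T_n(u) = (u ⊛ b_{k₁}, …, u ⊛ b_{k_{d+1}}). Then there exists a constant c > 0, independent of n, such that for all such n and all u ∈ ℂ^{(ℤ/nℤ)^d}: c·‖u‖ ≤ ‖T_n u‖ ≤ √(d+1)·‖u‖ (Euclidean norms). In particular, each T_n is injective and the condition number of T_n (largest singular value divided by smallest singular value) is at most √(d+1)/c for all n. -/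
open scoped BigOperators

/-- The Euclidean (`ℓ²`) norm of a finitely-indexed complex vector. -/
noncomputable def l2norm {ι : Type*} [Fintype ι] (u : ι → ℂ) : ℝ :=
  Real.sqrt (∑ t, ‖u t‖ ^ 2)

/-- The stacked cyclic-convolution map `T(u) = (u ⊛ b_{k₁}, …, u ⊛ b_{k_s})`. -/
noncomputable def stacked (n d s : ℕ) (k : Fin s → ℕ) (u : (Fin d → Fin n) → ℂ) :
    Fin s × (Fin d → Fin n) → ℂ :=
  fun p => cconv n d (boxC n (k p.1) d) u p.2

/-- The set of norms `‖T u‖` over unit vectors `u`; its `sSup` and `sInf` are the largest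
and smallest singular values of the stacked map `T`. -/
noncomputable def singVals (n d s : ℕ) (k : Fin s → ℕ) : Set ℝ :=
  {r | ∃ u : (Fin d → Fin n) → ℂ, l2norm u = 1 ∧ r = l2norm (stacked n d s k u)}


namespace Stmt15Aux

lemma geom_coprime_mem {R : Type*} [CommRing R] (I : Ideal R) (x : R) (a b : ℕ)
    (ha : 2 ≤ a) (hab : Nat.Coprime a b)
    (h1 : ∑ i ∈ Finset.range a, x ^ i ∈ I) (h2 : ∑ i ∈ Finset.range b, x ^ i ∈ I) :
    (1 : R) ∈ I := by
  have key : ∀ (c : ℕ), ∑ i ∈ Finset.range c, x ^ i ∈ I →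
      ∀ m : ℕ, ∑ i ∈ Finset.range (c * m), x ^ i ∈ I := by
    intro c hc m
    induction m with
    | zero => simp
    | succ m ih =>
      rw [Nat.mul_succ, Finset.sum_range_add]
      refine I.add_mem ih ?_
      simp only [pow_add]
      rw [← Finset.mul_sum]
      exact I.mul_mem_left _ hc
  obtain ⟨m, -, hm⟩ := Nat.exists_mul_mod_eq_one_of_coprime hab.symm (by omega : 1 < a)
  have h3 := key b h2 m
  rw [← Nat.div_add_mod (b * m) a, hm, Finset.sum_range_succ] at h3
  have h4 := key a h1 (b * m / a)
  have h5 : x ^ (a * (b * m / a)) ∈ I := (I.add_mem_iff_right h4).1 h3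
  have h6 : ∀ q : ℕ, x ^ (a * q) - 1 ∈ I := by
    intro q
    rw [← geom_sum_mul]
    exact I.mul_mem_right _ (key a h1 q)
  have := I.sub_mem h5 (h6 (b * m / a))
  simpa using this

lemma span_top {R : Type*} [CommRing R] (d : ℕ) (k : Fin (d + 1) → ℕ) (hk2 : ∀ j, 2 ≤ k j)
    (hcop : ∀ i j, i ≠ j → Nat.Coprime (k i) (k j)) (x : Fin d → R) :
    ∃ g : Fin (d + 1) → R, ∑ j, g j * ∏ l, ∑ i ∈ Finset.range (k j), x l ^ i = 1 := by
  rw [← Ideal.mem_span_range_iff_exists_fun, ← Ideal.eq_top_iff_one]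
  by_contra h
  obtain ⟨M, hM, hle⟩ := Ideal.exists_le_maximal _ h
  have hp := hM.isPrime
  have h1 : ∀ j, ∃ l, ∑ i ∈ Finset.range (k j), x l ^ i ∈ M := by
    intro j
    have := hle (Ideal.subset_span (Set.mem_range_self j))
    obtain ⟨l, -, hl⟩ := Ideal.IsPrime.prod_mem_iff.1 this
    exact ⟨l, hl⟩
  choose f hf using h1
  obtain ⟨i, j, hij, he⟩ := Fintype.exists_ne_map_eq_of_card_lt f (by simp)
  refine hM.ne_top ((Ideal.eq_top_iff_one _).2 ?_)
  exact geom_coprime_mem M (x (f i)) (k i) (k j) (hk2 i) (hcop i j hij) (hf i) (he ▸ hf j)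

section norm
variable {ι : Type*} [Fintype ι]

lemma l2norm_eq (u : ι → ℂ) : l2norm u = ‖(WithLp.toLp 2 u : EuclideanSpace ℂ ι)‖ := by
  rw [EuclideanSpace.norm_eq]; rfl

lemma l2norm_nonneg (u : ι → ℂ) : 0 ≤ l2norm u := Real.sqrt_nonneg _

lemma l2norm_smul (a : ℂ) (u : ι → ℂ) : l2norm (a • u) = ‖a‖ * l2norm u := by
  rw [l2norm_eq, l2norm_eq, WithLp.toLp_smul, norm_smul]

lemma l2norm_sum_le {κ : Type*} (s : Finset κ) (f : κ → ι → ℂ) :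
    l2norm (∑ j ∈ s, f j) ≤ ∑ j ∈ s, l2norm (f j) := by
  simp only [l2norm_eq]
  rw [WithLp.toLp_sum]
  exact norm_sum_le _ _

lemma l2norm_comp (e : ι ≃ ι) (u : ι → ℂ) : l2norm (fun t => u (e t)) = l2norm u := by
  unfold l2norm
  rw [Equiv.sum_comp e (fun t => ‖u t‖ ^ 2)]

lemma eq_of_l2norm_sub (u v : ι → ℂ) (h : l2norm (u - v) ≤ 0) : u = v := by
  rw [l2norm_eq, WithLp.toLp_sub] at h
  have := norm_le_zero_iff.1 h
  exact WithLp.toLp_injective 2 (sub_eq_zero.1 this)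

end norm

/-- Translation operator. -/
def shiftOp (n d : ℕ) [NeZero n] (m : Fin d → ℕ) : Module.End ℂ ((Fin d → Fin n) → ℂ) where
  toFun u t := u fun l => t l - Fin.ofNat n (m l)
  map_add' _ _ := rfl
  map_smul' _ _ := rfl

lemma l2norm_shift (n d : ℕ) [NeZero n] (m : Fin d → ℕ) (u : (Fin d → Fin n) → ℂ) :
    l2norm (shiftOp n d m u) = l2norm u :=
  l2norm_comp (Equiv.subRight (fun l => Fin.ofNat n (m l))) u

/-- Translation as a monoid homomorphism. -/
def shiftHom (n d : ℕ) [NeZero n] :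
    Multiplicative (Fin d → ℕ) →* Module.End ℂ ((Fin d → Fin n) → ℂ) where
  toFun m := shiftOp n d m.toAdd
  map_one' := by
    apply LinearMap.ext
    intro u
    funext t
    change u _ = u _
    congr 1
    funext l
    change t l - Fin.ofNat n 0 = t l
    have : Fin.ofNat n 0 = 0 := rfl
    rw [this, sub_zero]
  map_mul' a b := by
    apply LinearMap.ext
    intro u
    funext t
    change u _ = u _
    congr 1
    funext l
    change t l - Fin.ofNat n (a.toAdd l + b.toAdd l)
      = t l - Fin.ofNat n (a.toAdd l) - Fin.ofNat n (b.toAdd l)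
    have : Fin.ofNat n (a.toAdd l + b.toAdd l)
      = Fin.ofNat n (a.toAdd l) + Fin.ofNat n (b.toAdd l) := by
      ext; simp [Fin.val_add]
    rw [this, sub_sub]

/-- Polynomials in the translations act on arrays. -/
noncomputable def act (n d : ℕ) [NeZero n] :
    AddMonoidAlgebra ℂ (Fin d → ℕ) →ₐ[ℂ] Module.End ℂ ((Fin d → Fin n) → ℂ) :=
  AddMonoidAlgebra.lift ℂ _ _ (shiftHom n d)

/-- The l1 norm of the coefficients. -/
noncomputable def l1 {d : ℕ} (f : AddMonoidAlgebra ℂ (Fin d → ℕ)) : ℝ :=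
  ∑ m ∈ f.coeff.support, ‖f.coeff m‖

lemma l1_nonneg {d : ℕ} (f : AddMonoidAlgebra ℂ (Fin d → ℕ)) : 0 ≤ l1 f :=
  Finset.sum_nonneg fun _ _ => norm_nonneg _

lemma l2norm_act (n d : ℕ) [NeZero n] (f : AddMonoidAlgebra ℂ (Fin d → ℕ))
    (u : (Fin d → Fin n) → ℂ) : l2norm (act n d f u) ≤ l1 f * l2norm u := by
  rw [act, AddMonoidAlgebra.lift_apply, Finsupp.sum, LinearMap.sum_apply, l1, Finset.sum_mul]
  refine (l2norm_sum_le _ _).trans (Finset.sum_le_sum fun m _ => ?_)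
  rw [LinearMap.smul_apply, l2norm_smul]
  exact le_of_eq (congrArg _ (l2norm_shift n d m u))

/-- The variable. -/
noncomputable def X (d : ℕ) (l : Fin d) : AddMonoidAlgebra ℂ (Fin d → ℕ) :=
  AddMonoidAlgebra.single (Pi.single l 1) 1

lemma prod_geom (d k : ℕ) : ∏ l, ∑ i ∈ Finset.range k, X d l ^ i =
    ∑ p ∈ Fintype.piFinset (fun _ : Fin d => Finset.range k), AddMonoidAlgebra.single p 1 := by
  rw [Finset.prod_univ_sum]
  refine Finset.sum_congr rfl fun p _ => ?_
  simp only [X, AddMonoidAlgebra.single_pow, AddMonoidAlgebra.prod_single, one_pow,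
    Finset.prod_const_one]
  congr 1
  funext l
  simp [Finset.sum_apply, Pi.single_apply]

lemma act_geom (n d k : ℕ) [NeZero n] (u : (Fin d → Fin n) → ℂ) :
    act n d (∏ l, ∑ i ∈ Finset.range k, X d l ^ i) u =
    ∑ p ∈ Fintype.piFinset (fun _ : Fin d => Finset.range k), shiftOp n d p u := by
  rw [prod_geom, map_sum, LinearMap.sum_apply]
  refine Finset.sum_congr rfl fun p _ => ?_
  rw [act, AddMonoidAlgebra.lift_single, one_smul]
  rfl

lemma cconv_eq (n d k : ℕ) [NeZero n] (hk : k ≤ n) (u : (Fin d → Fin n) → ℂ) :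
    cconv n d (boxC n k d) u = (1 / (k : ℂ) ^ d) •
      ∑ p ∈ Fintype.piFinset (fun _ : Fin d => Finset.range k), shiftOp n d p u := by
  funext t
  simp only [cconv, boxC, Pi.smul_apply, Finset.sum_apply, smul_eq_mul, ite_mul, zero_mul]
  rw [← Finset.sum_filter, ← Finset.mul_sum]
  congr 1
  refine Finset.sum_bij' (fun s _ l => (s l : ℕ)) (fun p _ l => Fin.ofNat n (p l)) ?_ ?_ ?_ ?_ ?_
  · intro s hs
    simpa using hs
  · intro p hp
    simp only [Fintype.mem_piFinset, Finset.mem_range] at hp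
    simp only [Finset.mem_filter, Finset.mem_univ, true_and]
    intro l
    simpa [Nat.mod_eq_of_lt ((hp l).trans_le hk)] using hp l
  · intro s hs
    funext l
    simp
  · intro p hp
    simp only [Fintype.mem_piFinset, Finset.mem_range] at hp
    funext l
    simpa using Nat.mod_eq_of_lt ((hp l).trans_le hk)
  · intro s hs
    change u _ = u _
    congr 1
    funext l
    simp

lemma l2norm_cconv_le (n d k : ℕ) [NeZero n] (hk : k ≤ n) (hk0 : 0 < k)
    (u : (Fin d → Fin n) → ℂ) : l2norm (cconv n d (boxC n k d) u) ≤ l2norm u := by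
  rw [cconv_eq n d k hk, l2norm_smul]
  have h : l2norm (∑ p ∈ Fintype.piFinset (fun _ : Fin d => Finset.range k), shiftOp n d p u)
      ≤ (k : ℝ) ^ d * l2norm u := by
    refine (l2norm_sum_le _ _).trans ?_
    simp [l2norm_shift]
  have hk' : (0 : ℝ) < (k : ℝ) ^ d := by positivity
  have h2 : ‖(1 / (k : ℂ) ^ d)‖ = 1 / (k : ℝ) ^ d := by simp
  rw [h2, one_div, inv_mul_le_iff₀ hk']
  exact h

lemma sq_l2norm_stacked (n d s : ℕ) (k : Fin s → ℕ) (u : (Fin d → Fin n) → ℂ) :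
    l2norm (stacked n d s k u) =
      Real.sqrt (∑ j, l2norm (cconv n d (boxC n (k j) d) u) ^ 2) := by
  unfold l2norm
  congr 1
  rw [Fintype.sum_prod_type]
  refine Finset.sum_congr rfl fun j _ => ?_
  rw [Real.sq_sqrt (Finset.sum_nonneg fun _ _ => by positivity)]
  rfl

lemma le_stacked (n d s : ℕ) (k : Fin s → ℕ) (u : (Fin d → Fin n) → ℂ) (j : Fin s) :
    l2norm (cconv n d (boxC n (k j) d) u) ≤ l2norm (stacked n d s k u) := by
  rw [sq_l2norm_stacked]
  apply Real.le_sqrt_of_sq_le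
  exact Finset.single_le_sum (f := fun j => l2norm (cconv n d (boxC n (k j) d) u) ^ 2)
    (fun _ _ => by positivity) (Finset.mem_univ j)

lemma stacked_sub (n d s : ℕ) (k : Fin s → ℕ) (u v : (Fin d → Fin n) → ℂ) :
    stacked n d s k (u - v) = stacked n d s k u - stacked n d s k v := by
  funext p
  simp [stacked, cconv, mul_sub, Finset.sum_sub_distrib]

end Stmt15Aux

open Stmt15Aux in
theorem stmt15 (d : ℕ) (hd : 0 < d) (k : Fin (d + 1) → ℕ) (hk2 : ∀ j, 2 ≤ k j)
    (hcop : ∀ i j, i ≠ j → Nat.Coprime (k i) (k j)) :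
    ∃ c : ℝ, 0 < c ∧ ∀ n : ℕ, (∀ j, k j ≤ n) →
      (∀ u : (Fin d → Fin n) → ℂ,
        c * l2norm u ≤ l2norm (stacked n d (d + 1) k u) ∧
        l2norm (stacked n d (d + 1) k u) ≤ Real.sqrt (d + 1) * l2norm u) ∧
      Function.Injective (stacked n d (d + 1) k) ∧
      sSup (singVals n d (d + 1) k) / sInf (singVals n d (d + 1) k) ≤
        Real.sqrt (d + 1) / c := by
  obtain ⟨g, hg⟩ := span_top d k hk2 hcop (X d)
  set C : ℝ := 1 + ∑ j, l1 (g j) * (k j : ℝ) ^ d with hC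
  have hS : 0 ≤ ∑ j, l1 (g j) * (k j : ℝ) ^ d :=
    Finset.sum_nonneg fun j _ => mul_nonneg (l1_nonneg _) (by positivity)
  have hCpos : 0 < C := by linarith
  refine ⟨C⁻¹, inv_pos.2 hCpos, ?_⟩
  intro n hn
  haveI : NeZero n := ⟨by have := hk2 0; have := hn 0; omega⟩
  have main : ∀ u : (Fin d → Fin n) → ℂ,
        C⁻¹ * l2norm u ≤ l2norm (stacked n d (d + 1) k u) ∧
        l2norm (stacked n d (d + 1) k u) ≤ Real.sqrt (d + 1) * l2norm u := by
    intro u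
    constructor
    · rw [inv_mul_le_iff₀ hCpos]
      have hu : u = ∑ j, act n d (g j) (((k j : ℂ) ^ d) • cconv n d (boxC n (k j) d) u) := by
        have h1 := congrArg (fun f => act n d f u) hg
        simp only [map_sum, map_mul, map_one, LinearMap.sum_apply, Module.End.mul_apply,
          Module.End.one_apply] at h1
        conv_lhs => rw [← h1]
        refine Finset.sum_congr rfl fun j _ => ?_
        congr 1
        have hk0 : (k j : ℂ) ^ d ≠ 0 :=
          pow_ne_zero _ (by have := hk2 j; exact_mod_cast (by omega : k j ≠ 0))
        rw [cconv_eq n d (k j) (hn j), smul_smul, mul_one_div_cancel hk0, one_smul, ← act_geom]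
      have hle : l2norm u ≤ ∑ j, l1 (g j) * (k j : ℝ) ^ d * l2norm (stacked n d (d + 1) k u) := by
        conv_lhs => rw [hu]
        refine (l2norm_sum_le _ _).trans (Finset.sum_le_sum fun j _ => ?_)
        refine (l2norm_act _ _ _ _).trans ?_
        rw [l2norm_smul, mul_assoc]
        refine mul_le_mul_of_nonneg_left ?_ (l1_nonneg _)
        have : ‖(k j : ℂ) ^ d‖ = (k j : ℝ) ^ d := by simp
        rw [this]
        exact mul_le_mul_of_nonneg_left (le_stacked _ _ _ _ _ _) (by positivity)
      rw [← Finset.sum_mul] at hle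
      have := l2norm_nonneg (stacked n d (d + 1) k u)
      rw [hC, add_mul]
      linarith
    · rw [sq_l2norm_stacked]
      refine Real.sqrt_le_iff.2 ⟨mul_nonneg (Real.sqrt_nonneg _) (l2norm_nonneg _), ?_⟩
      rw [mul_pow, Real.sq_sqrt (by positivity)]
      have : ∑ j, l2norm (cconv n d (boxC n (k j) d) u) ^ 2
          ≤ ∑ _j : Fin (d + 1), l2norm u ^ 2 :=
        Finset.sum_le_sum fun j _ => pow_le_pow_left₀ (l2norm_nonneg _)
          (l2norm_cconv_le n d (k j) (hn j) (by have := hk2 j; omega) u) 2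
      simpa using this
  refine ⟨main, ?_, ?_⟩
  · intro u v huv
    apply eq_of_l2norm_sub
    have h := (main (u - v)).1
    have h0 : l2norm (stacked n d (d + 1) k (u - v)) = 0 := by
      rw [stacked_sub, huv, sub_self]
      simp [l2norm]
    rw [h0, inv_mul_le_iff₀ hCpos, mul_zero] at h
    exact h
  · have hne : (singVals n d (d + 1) k).Nonempty := by
      refine ⟨_, Pi.single 0 1, ?_, rfl⟩
      rw [l2norm_eq]
      exact (PiLp.norm_toLp_single 2 (fun _ => ℂ) 0 1).trans (by simp)
    have hsup : sSup (singVals n d (d + 1) k) ≤ Real.sqrt (d + 1) := by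
      refine csSup_le hne ?_
      rintro r ⟨u, hu, rfl⟩
      simpa [hu] using (main u).2
    have hinf : C⁻¹ ≤ sInf (singVals n d (d + 1) k) := by
      refine le_csInf hne ?_
      rintro r ⟨u, hu, rfl⟩
      simpa [hu] using (main u).1
    exact div_le_div₀ (Real.sqrt_nonneg _) hsup (inv_pos.2 hCpos) hinf
end
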